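/- Let Q be an M-invariant, adapted distribution on \Xi = \mathcal{P}(B_1) \times B_1 with Lebesgue intensity, and let Q = \int Q_\alpha dQ(\alpha) be its ergodic decomposition with respect to the dyadic magnification map M. Then Q-almost every ergodic component Q_\alpha is adapted. -/

import Mathlib

open MeasureTheory Filter Topology

/-- `B₁ = [-1,1]^d`. -/
abbrev UnitCube (d : ℕ) : Set (Fin d → ℝ) := Set.Icc (fun _ => (-1:ℝ)) (fun _ => (1:ℝ))

noncomputable instance (d : ℕ) : MeasurableSpace (ProbabilityMeasure (UnitCube d)) := borel _
instance (d : ℕ) : BorelSpace (ProbabilityMeasure (UnitCube d)) := ⟨rfl⟩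

/-- `Ξ = 𝒫(B₁) × B₁`. -/
abbrev Xi (d : ℕ) := ProbabilityMeasure (UnitCube d) × UnitCube d

/-- The homothety mapping the first-level dyadic cube containing a point of `B₁`
onto `B₁` (applied coordinatewise). -/
noncomputable def cubeExpand (d : ℕ) (x : UnitCube d) : UnitCube d :=
  ⟨fun i => if (x : Fin d → ℝ) i < 0 then 2 * (x : Fin d → ℝ) i + 1
            else 2 * (x : Fin d → ℝ) i - 1, by
    obtain ⟨h₁, h₂⟩ := x.2
    refine ⟨fun i => ?_, fun i => ?_⟩ <;>
      · have a := h₁ i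
        have b := h₂ i
        simp only at a b ⊢
        split_ifs <;> linarith⟩

/-- The first-level dyadic cube of `B₁` containing `x` (as a subset of `B₁`). -/
def cubeOf (d : ℕ) (x : UnitCube d) : Set (UnitCube d) :=
  {y | ∀ i, ((y : Fin d → ℝ) i < 0 ↔ (x : Fin d → ℝ) i < 0)}

open scoped Classical in
/-- The dyadic magnification operator `M(μ,x) = (T_{D(x)}^□ μ, T_{D(x)} x)` on
`Ξ = 𝒫(B₁) × B₁`: the measure component is the normalized pushforward of `μ`
restricted to the first-level dyadic cube `D(x)` containing `x`, rescaled to `B₁`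
(with a junk value when the normalization is undefined). -/
noncomputable def magnify (d : ℕ) (p : Xi d) : Xi d :=
  if h : IsProbabilityMeasure
      ((((p.1 : Measure (UnitCube d)) (cubeOf d p.2))⁻¹ •
        ((p.1 : Measure (UnitCube d)).restrict (cubeOf d p.2)).map (cubeExpand d))) then
    (⟨_, h⟩, cubeExpand d p.2)
  else (p.1, cubeExpand d p.2)

/-- Adaptedness: `∫ f(ν,x) dQ(ν,x) = ∫∫ f(ν,x) dν(x) dQ̄(ν)` for all continuous `f`. -/
def Adapted (d : ℕ) (Q : Measure (Xi d)) : Prop :=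
  ∀ f : C(Xi d, ℝ),
    (∫ p, f p ∂Q) =
      ∫ ν, (∫ x, f (ν, x) ∂(ν : Measure (UnitCube d))) ∂(Q.map Prod.fst)

/-- Normalized Lebesgue measure on `B₁`. -/
noncomputable def normLeb (d : ℕ) : Measure (UnitCube d) :=
  ((2 : ENNReal) ^ d)⁻¹ • (volume : Measure (Fin d → ℝ)).comap Subtype.val

/-- The intensity measure `[Q](A) = ∫ μ(A) dQ̄(μ)` equals normalized Lebesgue measure. -/
def HasLebesgueIntensity (d : ℕ) (Q : Measure (Xi d)) : Prop :=
  ∀ A : Set (UnitCube d), MeasurableSet A →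
    (∫⁻ ν, (ν : Measure (UnitCube d)) A ∂(Q.map Prod.fst)) = normLeb d A

/-- A CP distribution: an `M`-invariant, adapted probability distribution on `Ξ`
with normalized-Lebesgue intensity. -/
def IsCPD (d : ℕ) (Q : Measure (Xi d)) : Prop :=
  IsProbabilityMeasure Q ∧ MeasurePreserving (magnify d) Q Q ∧
    Adapted d Q ∧ HasLebesgueIntensity d Q

/-!
Fix a set `A` of measures and a finite union `C` of level-`k` dyadic cubes, and put
`g(ν, x) = 1_A(ν) (1_C(x) - ν(C))`. A measure with integral zero against all such `g` is adapted,
and countably many pairs `(A, C)` suffice, so it is enough to prove `∫ g dQ_α = 0` for almost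
every `α` with `A` and `C` fixed. Given `ν` and the first `k` digits of `x`, adaptedness makes the
second coordinate of `M^k(ν, x)` distributed according to the first; hence `g` is orthogonal
in `L²(Q)` to all its later iterates under `M^k`, and the Birkhoff averages of `g` along `M^k` tend
to `0` in `L²(Q)`, hence in `L¹(Q)`. As `Q_α` is invariant, `∫ g dQ_α` is also the integral of each
of these averages; integrating its absolute value over `α` shows that it vanishes almost surely.
-/

open ProbabilityTheory

section BirkhoffSums

variable {α Ω E : Type*} [MeasurableSpace α] [MeasurableSpace Ω] {μ : Measure α} {T : α → α}

lemma memLp_birkhoffSum [NormedAddCommGroup E] {g : α → E} {p : ENNReal}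
    (hT : MeasurePreserving T μ μ) (hg : MemLp g p μ) (n : ℕ) :
    MemLp (birkhoffSum T g n) p μ :=
  memLp_finsetSum _ fun i _ => hg.comp_measurePreserving (hT.iterate i)

lemma memLp_birkhoffAverage [NormedAddCommGroup E] [NormedSpace ℝ E] {g : α → E} {p : ENNReal}
    (hT : MeasurePreserving T μ μ) (hg : MemLp g p μ) (n : ℕ) :
    MemLp (birkhoffAverage ℝ T g n) p μ :=
  (memLp_birkhoffSum hT hg n).const_smul (n : ℝ)⁻¹

lemma integral_comp_of_measurePreserving [NormedAddCommGroup E] [NormedSpace ℝ E] {g : α → E}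
    (hT : MeasurePreserving T μ μ) (hg : AEStronglyMeasurable g μ) :
    ∫ x, g (T x) ∂μ = ∫ x, g x ∂μ := by
  rw [← integral_map hT.aemeasurable (hT.map_eq.symm ▸ hg), hT.map_eq]

lemma integral_birkhoffAverage [NormedAddCommGroup E] [NormedSpace ℝ E] {g : α → E}
    (hT : MeasurePreserving T μ μ) (hg : Integrable g μ) {n : ℕ} (hn : n ≠ 0) :
    ∫ x, birkhoffAverage ℝ T g n x ∂μ = ∫ x, g x ∂μ := by
  have hiter (i : ℕ) : Integrable (fun x => g (T^[i] x)) μ :=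
    (hT.iterate i).integrable_comp_of_integrable hg
  have hshift (i : ℕ) : ∫ x, g (T^[i] x) ∂μ = ∫ x, g x ∂μ :=
    integral_comp_of_measurePreserving (hT.iterate i) hg.aestronglyMeasurable
  simp only [birkhoffAverage, birkhoffSum]
  rw [integral_smul, integral_finsetSum _ fun i _ => hiter i]
  simp only [hshift, Finset.sum_const, Finset.card_range]
  rw [← Nat.cast_smul_eq_nsmul ℝ, inv_smul_smul₀ (Nat.cast_ne_zero.2 hn)]

lemma integral_mul_birkhoffSum_comp_eq_zero {g : α → ℝ} (hT : MeasurePreserving T μ μ)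
    (hg : MemLp g 2 μ) (horth : ∀ n, ∫ x, g x * g (T^[n + 1] x) ∂μ = 0) (n : ℕ) :
    ∫ x, g x * birkhoffSum T g n (T x) ∂μ = 0 := by
  have hint (i : ℕ) : Integrable (fun x => g x * g (T^[i + 1] x)) μ :=
    hg.integrable_mul (hg.comp_measurePreserving (hT.iterate (i + 1)))
  simp only [birkhoffSum, Finset.mul_sum, ← Function.iterate_succ_apply]
  rw [integral_finsetSum _ fun i _ => hint i]
  exact Finset.sum_eq_zero fun i _ => horth i

lemma integral_birkhoffSum_sq_of_orthogonal {g : α → ℝ} (hT : MeasurePreserving T μ μ)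
    (hg : MemLp g 2 μ) (horth : ∀ n, ∫ x, g x * g (T^[n + 1] x) ∂μ = 0) (n : ℕ) :
    ∫ x, birkhoffSum T g n x ^ 2 ∂μ = n * ∫ x, g x ^ 2 ∂μ := by
  induction n with
  | zero => simp
  | succ n ih =>
    have hS := memLp_birkhoffSum hT hg n
    have hST : MemLp (fun x => birkhoffSum T g n (T x)) 2 μ := hS.comp_measurePreserving hT
    have hshift : ∫ x, birkhoffSum T g n (T x) ^ 2 ∂μ = n * ∫ x, g x ^ 2 ∂μ :=
      (integral_comp_of_measurePreserving hT hS.integrable_sq.aestronglyMeasurable).trans ih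
    calc ∫ x, birkhoffSum T g (n + 1) x ^ 2 ∂μ
        = ∫ x, (g x ^ 2 + 2 * (g x * birkhoffSum T g n (T x)))
            + birkhoffSum T g n (T x) ^ 2 ∂μ := by
          congr with x
          rw [birkhoffSum_succ']
          ring
      _ = ∫ x, g x ^ 2 ∂μ + 2 * ∫ x, g x * birkhoffSum T g n (T x) ∂μ
            + ∫ x, birkhoffSum T g n (T x) ^ 2 ∂μ := by
          have hcross : Integrable (fun x => 2 * (g x * birkhoffSum T g n (T x))) μ :=
            (hg.integrable_mul hST).const_mul 2
          have hsum : Integrable (fun x => g x ^ 2 + 2 * (g x * birkhoffSum T g n (T x))) μ :=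
            hg.integrable_sq.add hcross
          rw [integral_add hsum hST.integrable_sq,
            integral_add hg.integrable_sq hcross, integral_const_mul]
      _ = (n + 1 : ℕ) * ∫ x, g x ^ 2 ∂μ := by
          rw [integral_mul_birkhoffSum_comp_eq_zero hT hg horth n, hshift]
          push_cast
          ring

lemma tendsto_eLpNorm_one_birkhoffAverage_of_orthogonal [IsFiniteMeasure μ] {g : α → ℝ}
    (hT : MeasurePreserving T μ μ) (hg : MemLp g 2 μ)
    (horth : ∀ n, ∫ x, g x * g (T^[n + 1] x) ∂μ = 0) :
    Tendsto (fun n => eLpNorm (birkhoffAverage ℝ T g n) 1 μ) atTop (𝓝 0) := by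
  have hL2 (n : ℕ) : eLpNorm (birkhoffAverage ℝ T g n) 2 μ
      = ENNReal.ofReal (√((n : ℝ)⁻¹ * ∫ x, g x ^ 2 ∂μ)) := by
    have hsq : ∫ x, birkhoffAverage ℝ T g n x ^ 2 ∂μ = (n : ℝ)⁻¹ * ∫ x, g x ^ 2 ∂μ := by
      simp only [birkhoffAverage, smul_eq_mul, mul_pow]
      rw [integral_const_mul, integral_birkhoffSum_sq_of_orthogonal hT hg horth]
      by_cases hn : (n : ℝ) = 0
      · simp [hn]
      · field_simp
    rw [(memLp_birkhoffAverage hT hg n).eLpNorm_eq_integral_rpow_norm two_ne_zero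
      ENNReal.ofNat_ne_top, ← hsq, Real.sqrt_eq_rpow]
    simp
  have hL2_tendsto : Tendsto (fun n => eLpNorm (birkhoffAverage ℝ T g n) 2 μ) atTop (𝓝 0) := by
    simp only [hL2]
    have := (tendsto_inv_atTop_nhds_zero_nat (𝕜 := ℝ)).mul_const (∫ x, g x ^ 2 ∂μ)
    simpa using ENNReal.tendsto_ofReal this.sqrt
  have hC : μ Set.univ ^ (1 / (1 : ENNReal).toReal - 1 / (2 : ENNReal).toReal) ≠ ⊤ :=
    ENNReal.rpow_ne_top_of_nonneg (by norm_num) (measure_ne_top _ _)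
  refine tendsto_of_tendsto_of_tendsto_of_le_of_le tendsto_const_nhds
    (by simpa using ENNReal.Tendsto.mul_const hL2_tendsto (.inr hC)) (fun _ => zero_le)
    fun n => eLpNorm_le_eLpNorm_mul_rpow_measure_univ one_le_two
      (memLp_birkhoffAverage hT hg n).aestronglyMeasurable

lemma measurePreserving_comp_of_ae {P : Measure Ω} {κ : Kernel Ω α} (hT : Measurable T)
    (hinv : ∀ᵐ a ∂P, MeasurePreserving T (κ a) (κ a)) :
    MeasurePreserving T (κ ∘ₘ P) (κ ∘ₘ P) := by
  refine ⟨hT, ?_⟩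
  rw [Measure.map_comp _ _ hT]
  refine Measure.bind_congr_right ?_
  filter_upwards [hinv] with a ha
  rw [Kernel.map_apply _ hT, ha.map_eq]

lemma ae_integral_eq_zero_of_tendsto_birkhoffAverage [NormedAddCommGroup E] [NormedSpace ℝ E]
    {P : Measure Ω} {κ : Kernel Ω α} {g : α → E} (hT : Measurable T)
    (hinv : ∀ᵐ a ∂P, MeasurePreserving T (κ a) (κ a)) (hg : StronglyMeasurable g)
    (hint : Integrable g (κ ∘ₘ P))
    (hlim : Tendsto (fun n => eLpNorm (birkhoffAverage ℝ T g n) 1 (κ ∘ₘ P)) atTop (𝓝 0)) :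
    ∀ᵐ a ∂P, ∫ x, g x ∂κ a = 0 := by
  have hmeas : AEMeasurable (fun a => ‖∫ x, g x ∂κ a‖ₑ) P := hg.integral_kernel.enorm.aemeasurable
  have hle (n : ℕ) (hn : n ≠ 0) :
      ∫⁻ a, ‖∫ x, g x ∂κ a‖ₑ ∂P ≤ eLpNorm (birkhoffAverage ℝ T g n) 1 (κ ∘ₘ P) := by
    have havg := (memLp_birkhoffAverage (measurePreserving_comp_of_ae hT hinv)
      (memLp_one_iff_integrable.2 hint) n).aestronglyMeasurable
    rw [eLpNorm_one_eq_lintegral_enorm, Measure.lintegral_bind κ.aemeasurable havg.enorm]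
    refine lintegral_mono_ae ?_
    filter_upwards [hinv, Measure.ae_integrable_of_integrable_comp hint] with a ha hga
    rw [← integral_birkhoffAverage ha hga hn]
    exact enorm_integral_le_lintegral_enorm _
  have hzero : ∫⁻ a, ‖∫ x, g x ∂κ a‖ₑ ∂P = 0 :=
    le_zero_iff.1 <| ge_of_tendsto hlim <| (eventually_ne_atTop 0).mono hle
  filter_upwards [(lintegral_eq_zero_iff' hmeas).1 hzero] with a ha
  exact enorm_eq_zero.1 ha

end BirkhoffSums

section ConditionalKernels

variable {X Y Ω : Type*} [MeasurableSpace X] [MeasurableSpace Y] [MeasurableSpace Ω]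
  {η : Kernel X Y} {ρ : Measure (X × Y)}

/-- Bounded measurable functions on `X × Y` whose conditional mean given the first coordinate
vanishes when the second coordinate has conditional law `η`. -/
structure FiberCentered (η : Kernel X Y) (h : X × Y → ℝ) : Prop where
  measurable : Measurable h
  bounded : ∃ B, ∀ p, ‖h p‖ ≤ B
  integral_eq_zero : ∀ x, ∫ y, h (x, y) ∂η x = 0

/-- The map `T` renews the fibre law `η` on `C`: if `y` is chosen by `η x` and conditioned to lie
in `C`, then the second coordinate of `T (x, y)` again has conditional law `η` given the first.
This is encoded by testing against fibre-centred functions. -/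
def RenewsFiber (η : Kernel X Y) (T : X × Y → X × Y) (C : Set Y) : Prop :=
  ∀ ⦃h : X × Y → ℝ⦄, FiberCentered η h → ∀ x, ∫ y in C, h (T (x, y)) ∂η x = 0

/-- The indicator of the rectangle `A ×ˢ C` minus its conditional mean given the first
coordinate. Integrals of these functions detect whether `η` is a conditional kernel. -/
noncomputable def centeredRect (η : Kernel X Y) (A : Set X) (C : Set Y) (p : X × Y) : ℝ :=
  A.indicator 1 p.1 * (C.indicator 1 p.2 - (η p.1).real C)

lemma FiberCentered.memLp [IsFiniteMeasure ρ] {h : X × Y → ℝ} (hh : FiberCentered η h)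
    (p : ENNReal) : MemLp h p ρ :=
  hh.bounded.elim fun B hB => .of_bound hh.measurable.aestronglyMeasurable B (.of_forall hB)

lemma FiberCentered.integrable_fiber [IsFiniteKernel η] {h : X × Y → ℝ} (hh : FiberCentered η h)
    {T : X × Y → X × Y} (hT : Measurable T) (x : X) :
    Integrable (fun y => h (T (x, y))) (η x) :=
  hh.bounded.elim fun B hB => .of_bound
    (hh.measurable.comp (hT.comp measurable_prodMk_left)).aestronglyMeasurable B
    (.of_forall fun _ => hB _)

lemma measurable_centeredRect {A : Set X} {C : Set Y} (hA : MeasurableSet A)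
    (hC : MeasurableSet C) : Measurable (centeredRect η A C) :=
  ((measurable_one.indicator hA).comp measurable_fst).mul <|
    ((measurable_one.indicator hC).comp measurable_snd).sub <|
      (η.measurable_coe hC).ennreal_toReal.comp measurable_fst

lemma fiberCentered_centeredRect [IsMarkovKernel η] {A : Set X} {C : Set Y} (hA : MeasurableSet A)
    (hC : MeasurableSet C) : FiberCentered η (centeredRect η A C) where
  measurable := measurable_centeredRect hA hC
  bounded := by
    refine ⟨1, fun p => ?_⟩
    have h0 : 0 ≤ (η p.1).real C := measureReal_nonneg
    have h1 : (η p.1).real C ≤ 1 := measureReal_le_one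
    simp only [centeredRect, Set.indicator, Pi.one_apply, Real.norm_eq_abs, abs_le]
    split_ifs <;> constructor <;> linarith
  integral_eq_zero x := by
    simp only [centeredRect]
    rw [integral_const_mul, integral_sub ((integrable_const 1).indicator hC) (integrable_const _),
      integral_indicator_one hC]
    simp

lemma integral_centeredRect [IsMarkovKernel η] [IsFiniteMeasure ρ] {A : Set X} {C : Set Y}
    (hA : MeasurableSet A) (hC : MeasurableSet C) :
    ∫ p, centeredRect η A C p ∂ρ = ρ.real (A ×ˢ C) - (ρ.fst ⊗ₘ η).real (A ×ˢ C) := by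
  have hsplit (p : X × Y) : centeredRect η A C p =
      (A ×ˢ C).indicator 1 p - A.indicator (fun x => (η x).real C) p.1 := by
    by_cases hpA : p.1 ∈ A <;> by_cases hpC : p.2 ∈ C <;> simp [centeredRect, hpA, hpC]
  have hηC : Measurable fun x => (η x).real C := (η.measurable_coe hC).ennreal_toReal
  have hcond : ∫ p, A.indicator (fun x => (η x).real C) p.1 ∂ρ = (ρ.fst ⊗ₘ η).real (A ×ˢ C) := by
    rw [measureReal_def, Measure.compProd_apply_prod hA hC, Measure.fst,
      ← integral_map measurable_fst.aemeasurable (hηC.indicator hA).aestronglyMeasurable,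
      integral_indicator hA]
    exact integral_toReal (η.measurable_coe hC).aemeasurable
      (.of_forall fun _ => measure_lt_top _ _)
  have hint : Integrable (fun p : X × Y => A.indicator (fun x => (η x).real C) p.1) ρ :=
    ((Kernel.IsFiniteKernel.integrable ρ.fst η hC).indicator hA).comp_measurable measurable_fst
  have hind : Integrable ((A ×ˢ C).indicator (1 : X × Y → ℝ)) ρ :=
    (integrable_const 1).indicator (hA.prod hC)
  simp only [hsplit]
  rw [integral_sub hind hint, integral_indicator_one (hA.prod hC), hcond]

lemma isCondKernel_of_integral_centeredRect_eq_zero [IsMarkovKernel η] [IsFiniteMeasure ρ]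
    {𝒜 : Set (Set X)} {𝒞 : Set (Set Y)} (hAgen : ‹MeasurableSpace X› = .generateFrom 𝒜)
    (hApi : IsPiSystem 𝒜) (hAuniv : Set.univ ∈ 𝒜)
    (hCgen : ‹MeasurableSpace Y› = .generateFrom 𝒞) (hCpi : IsPiSystem 𝒞)
    (hCuniv : Set.univ ∈ 𝒞)
    (hzero : ∀ A ∈ 𝒜, ∀ C ∈ 𝒞, ∫ p, centeredRect η A C p ∂ρ = 0) : ρ.IsCondKernel η := by
  have hA (A) (h : A ∈ 𝒜) : MeasurableSet A := hAgen ▸ MeasurableSpace.measurableSet_generateFrom h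
  have hC (C) (h : C ∈ 𝒞) : MeasurableSet C := hCgen ▸ MeasurableSpace.measurableSet_generateFrom h
  have hrect : ∀ s ∈ Set.image2 (· ×ˢ ·) 𝒜 𝒞, (ρ.fst ⊗ₘ η) s = ρ s := by
    rintro _ ⟨A, hA𝒜, C, hC𝒞, rfl⟩
    have := hzero A hA𝒜 C hC𝒞
    rw [integral_centeredRect (hA A hA𝒜) (hC C hC𝒞), sub_eq_zero] at this
    exact ((measureReal_eq_measureReal_iff (by finiteness) (by finiteness)).1 this).symm
  refine ⟨ext_of_generate_finite _ ?_ (hApi.prod hCpi) hrect ?_⟩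
  · refine (generateFrom_eq_prod hAgen.symm hCgen.symm ?_ ?_).symm
    · exact ⟨fun _ => Set.univ, fun _ => hAuniv, Set.iUnion_const _⟩
    · exact ⟨fun _ => Set.univ, fun _ => hCuniv, Set.iUnion_const _⟩
  · exact hrect _ ⟨_, hAuniv, _, hCuniv, Set.univ_prod_univ⟩

lemma RenewsFiber.iUnion [IsFiniteKernel η] {T : X × Y → X × Y} (hT : Measurable T) {ι : Type*}
    [Finite ι] {C : ι → Set Y} (hCmeas : ∀ i, MeasurableSet (C i))
    (hCdisj : Pairwise (Function.onFun Disjoint C)) (hC : ∀ i, RenewsFiber η T (C i)) :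
    RenewsFiber η T (⋃ i, C i) := by
  have := Fintype.ofFinite ι
  intro h hh x
  rw [integral_iUnion_fintype hCmeas hCdisj fun _ => (hh.integrable_fiber hT x).integrableOn]
  exact Finset.sum_eq_zero fun i _ => hC i hh x

lemma RenewsFiber.comp {S T : X × Y → X × Y} {f : Y → Y} {C D : Set Y} (hS : Measurable S)
    (hf : Measurable f) (hTf : ∀ p, (T p).2 = f p.2) (hC : MeasurableSet C)
    (hSC : RenewsFiber η S C) (hTD : RenewsFiber η T D) :
    RenewsFiber η (S ∘ T) (D ∩ f ⁻¹' C) := by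
  intro h hh x
  have hres : FiberCentered η ((Prod.snd ⁻¹' C).indicator (h ∘ S)) := by
    refine ⟨(hh.measurable.comp hS).indicator (measurable_snd hC), ?_, fun x => ?_⟩
    · exact hh.bounded.imp fun _ hB _ => (norm_indicator_le_norm_self _ _).trans (hB _)
    · rw [← hSC hh x, ← integral_indicator hC]
      rfl
  rw [← hTD hres x, ← setIntegral_indicator (hf hC)]
  congr with y
  have hmem : T (x, y) ∈ Prod.snd ⁻¹' C ↔ y ∈ f ⁻¹' C := by
    simp only [Set.mem_preimage, hTf]
  by_cases hy : y ∈ f ⁻¹' C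
  · rw [Set.indicator_of_mem hy, Set.indicator_of_mem (hmem.2 hy)]
    rfl
  · rw [Set.indicator_of_notMem hy, Set.indicator_of_notMem (hmem.not.2 hy)]

lemma FiberCentered.comp {T : X × Y → X × Y} (hT : Measurable T)
    (hrenew : RenewsFiber η T Set.univ) {h : X × Y → ℝ} (hh : FiberCentered η h) :
    FiberCentered η (h ∘ T) where
  measurable := hh.measurable.comp hT
  bounded := hh.bounded.imp fun _ hB _ => hB _
  integral_eq_zero x := by simpa using hrenew hh x

lemma FiberCentered.iterate {T : X × Y → X × Y} (hT : Measurable T)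
    (hrenew : RenewsFiber η T Set.univ) {h : X × Y → ℝ} (hh : FiberCentered η h) (n : ℕ) :
    FiberCentered η (h ∘ T^[n]) := by
  induction n with
  | zero => exact hh
  | succ n ih => exact ih.comp hT hrenew

lemma integral_centeredRect_mul_comp_eq_zero [IsMarkovKernel η] [IsFiniteMeasure ρ]
    (hρ : ρ.IsCondKernel η) {T : X × Y → X × Y} (hT : Measurable T) {A : Set X} {C : Set Y}
    (hA : MeasurableSet A) (hC : MeasurableSet C) (hrenewC : RenewsFiber η T C)
    (hrenew : RenewsFiber η T Set.univ) {h : X × Y → ℝ} (hh : FiberCentered η h) :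
    ∫ p, centeredRect η A C p * h (T p) ∂ρ = 0 := by
  have hg := fiberCentered_centeredRect (η := η) hA hC
  have hint : Integrable (fun p => centeredRect η A C p * h (T p)) (ρ.fst ⊗ₘ η) :=
    (hg.memLp 2).integrable_mul ((hh.comp hT hrenew).memLp 2)
  rw [← ρ.disintegrate η, Measure.integral_compProd hint]
  refine integral_eq_zero_of_ae (.of_forall fun x => ?_)
  calc ∫ y, centeredRect η A C (x, y) * h (T (x, y)) ∂η x
      = ∫ y, A.indicator 1 x *
          (C.indicator (fun y => h (T (x, y))) y - (η x).real C * h (T (x, y))) ∂η x := by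
        congr with y
        simp only [centeredRect, Set.indicator, Pi.one_apply]
        split_ifs <;> ring
    _ = A.indicator 1 x *
          (∫ y in C, h (T (x, y)) ∂η x - (η x).real C * ∫ y, h (T (x, y)) ∂η x) := by
        have hhT := hh.integrable_fiber hT x
        rw [integral_const_mul, integral_sub (hhT.indicator hC) (hhT.const_mul _),
          integral_indicator hC, integral_const_mul]
    _ = 0 := by rw [hrenewC hh x, ← setIntegral_univ, hrenew hh x]; simp

lemma ae_integral_centeredRect_eq_zero [IsMarkovKernel η] {P : Measure Ω}
    {κ : Kernel Ω (X × Y)} [IsFiniteMeasure (κ ∘ₘ P)] (hκ : (κ ∘ₘ P).IsCondKernel η)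
    {T : X × Y → X × Y} (hT : Measurable T) (hinv : ∀ᵐ a ∂P, MeasurePreserving T (κ a) (κ a))
    {A : Set X} {C : Set Y} (hA : MeasurableSet A) (hC : MeasurableSet C)
    (hrenewC : RenewsFiber η T C) (hrenew : RenewsFiber η T Set.univ) :
    ∀ᵐ a ∂P, ∫ p, centeredRect η A C p ∂κ a = 0 := by
  have hg := fiberCentered_centeredRect (η := η) hA hC
  have horth (n : ℕ) :
      ∫ p, centeredRect η A C p * centeredRect η A C (T^[n + 1] p) ∂(κ ∘ₘ P) = 0 :=
    integral_centeredRect_mul_comp_eq_zero hκ hT hA hC hrenewC hrenew (hg.iterate hT hrenew n)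
  exact ae_integral_eq_zero_of_tendsto_birkhoffAverage hT hinv hg.measurable.stronglyMeasurable
    ((hg.memLp 1).integrable le_rfl) <|
      tendsto_eLpNorm_one_birkhoffAverage_of_orthogonal (measurePreserving_comp_of_ae hT hinv)
        (hg.memLp 2) horth

lemma exists_countable_isPiSystem_generateFrom (X : Type*) [m : MeasurableSpace X]
    [MeasurableSpace.CountablyGenerated X] :
    ∃ 𝒜 : Set (Set X), 𝒜.Countable ∧ IsPiSystem 𝒜 ∧ Set.univ ∈ 𝒜 ∧ m = .generateFrom 𝒜 := by
  obtain ⟨b, hb, rfl⟩ := MeasurableSpace.CountablyGenerated.isCountablyGenerated (α := X)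
  refine ⟨Set.sInter '' {F | F.Finite ∧ F ⊆ b}, (Set.countable_ofPred_finite_subset hb).image _,
    ?_, ⟨∅, by simp⟩, le_antisymm ?_ ?_⟩
  · rintro _ ⟨F, ⟨hF, hFb⟩, rfl⟩ _ ⟨G, ⟨hG, hGb⟩, rfl⟩ -
    exact ⟨F ∪ G, ⟨hF.union hG, Set.union_subset hFb hGb⟩, Set.sInter_union F G⟩
  · exact MeasurableSpace.generateFrom_mono fun s hs =>
      ⟨{s}, ⟨Set.finite_singleton s, Set.singleton_subset_iff.2 hs⟩, Set.sInter_singleton s⟩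
  · refine MeasurableSpace.generateFrom_le ?_
    rintro _ ⟨F, ⟨hF, hFb⟩, rfl⟩
    exact .sInter hF.countable fun s hs => MeasurableSpace.measurableSet_generateFrom (hFb hs)

theorem ae_isCondKernel_of_ae_measurePreserving [MeasurableSpace.CountablyGenerated X]
    [IsMarkovKernel η] {P : Measure Ω} {κ : Kernel Ω (X × Y)} [IsFiniteKernel κ]
    [IsFiniteMeasure (κ ∘ₘ P)] (hκ : (κ ∘ₘ P).IsCondKernel η) {T : X × Y → X × Y}
    (hT : Measurable T) (hinv : ∀ᵐ a ∂P, MeasurePreserving T (κ a) (κ a)) {𝒞 : Set (Set Y)}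
    (hCcount : 𝒞.Countable) (hCpi : IsPiSystem 𝒞) (hCuniv : Set.univ ∈ 𝒞)
    (hCgen : ‹MeasurableSpace Y› = .generateFrom 𝒞)
    (hrenew : ∀ C ∈ 𝒞, ∃ k, RenewsFiber η T^[k] C ∧ RenewsFiber η T^[k] Set.univ) :
    ∀ᵐ a ∂P, (κ a).IsCondKernel η := by
  obtain ⟨𝒜, hAcount, hApi, hAuniv, hAgen⟩ := exists_countable_isPiSystem_generateFrom X
  have hzero : ∀ᵐ a ∂P, ∀ A ∈ 𝒜, ∀ C ∈ 𝒞, ∫ p, centeredRect η A C p ∂κ a = 0 := by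
    refine (ae_ball_iff hAcount).2 fun A hA => (ae_ball_iff hCcount).2 fun C hC => ?_
    have hAmeas : MeasurableSet A := hAgen ▸ MeasurableSpace.measurableSet_generateFrom hA
    have hCmeas : MeasurableSet C := hCgen ▸ MeasurableSpace.measurableSet_generateFrom hC
    obtain ⟨k, hkC, hk⟩ := hrenew C hC
    exact ae_integral_centeredRect_eq_zero hκ (hT.iterate k) (hinv.mono fun _ ha => ha.iterate k)
      hAmeas hCmeas hkC hk
  filter_upwards [hzero] with a ha
  exact isCondKernel_of_integral_centeredRect_eq_zero hAgen hApi hAuniv hCgen hCpi hCuniv ha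

end ConditionalKernels

section TautologicalKernel

variable {X : Type*} [MeasurableSpace X] [TopologicalSpace X] [HasOuterApproxClosed X]
  [BorelSpace X] [MeasurableSpace (ProbabilityMeasure X)]
  [OpensMeasurableSpace (ProbabilityMeasure X)]

lemma measurable_coe_probabilityMeasure :
    Measurable fun ν : ProbabilityMeasure X => (ν : Measure X) := by
  refine Measurable.measure_of_isPiSystem_of_isProbabilityMeasure
    (BorelSpace.measurable_eq.trans borel_eq_generateFrom_isClosed) isPiSystem_isClosed ?_
  intro F hF
  refine measurable_of_tendsto_metrizable (f := fun n (ν : ProbabilityMeasure X) =>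
    ∫⁻ x, (hF.apprSeq n x : ENNReal) ∂(ν : Measure X)) (fun n => ?_)
    (tendsto_pi_nhds.2 fun ν => HasOuterApproxClosed.tendsto_lintegral_apprSeq hF _)
  exact (continuous_iff_continuousAt.2 fun ν =>
    ProbabilityMeasure.tendsto_iff_forall_lintegral_tendsto.1 tendsto_id _).measurable

variable (X) in
/-- The tautological kernel, sending a probability measure to itself. An adapted distribution is
one having it as a conditional kernel. -/
noncomputable def tautologicalKernel : Kernel (ProbabilityMeasure X) X :=
  ⟨fun ν => (ν : Measure X), measurable_coe_probabilityMeasure⟩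

instance : IsMarkovKernel (tautologicalKernel X) :=
  ⟨fun ν => inferInstanceAs (IsProbabilityMeasure (ν : Measure X))⟩

end TautologicalKernel

lemma adapted_iff_isCondKernel {d : ℕ} {Q : Measure (Xi d)} [IsFiniteMeasure Q] :
    Adapted d Q ↔ Q.IsCondKernel (tautologicalKernel (UnitCube d)) := by
  have hcompProd (f : C(Xi d, ℝ)) :
      ∫ p, f p ∂(Q.fst ⊗ₘ tautologicalKernel (UnitCube d)) =
        ∫ ν, ∫ x, f (ν, x) ∂(ν : Measure (UnitCube d)) ∂(Q.map Prod.fst) :=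
    Measure.integral_compProd ((BoundedContinuousFunction.mkOfCompact f).integrable _)
  refine ⟨fun h => ⟨?_⟩, fun h f => ?_⟩
  · refine ext_of_forall_integral_eq_of_IsFiniteMeasure fun f => ?_
    exact (hcompProd f.toContinuousMap).trans (h f.toContinuousMap).symm
  · rw [← hcompProd, Q.disintegrate]

section DyadicCoding

variable {d : ℕ}

/-- The first dyadic digit of a point of `[-1,1]^d`: the index of the first-level dyadic cube
containing it, the digit of coordinate `i` recording whether that coordinate is negative. -/
noncomputable def dyadicDigit (x : UnitCube d) (i : Fin d) : Bool :=
  decide ((x : Fin d → ℝ) i < 0)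

/-- The full dyadic expansion, read off along the orbit of `cubeExpand`; it determines the
point. -/
noncomputable def dyadicDigits (x : UnitCube d) (n : ℕ) : Fin d → Bool :=
  dyadicDigit ((cubeExpand d)^[n] x)

/-- The first `k` dyadic digits, whose fibres are the level-`k` dyadic cubes. -/
noncomputable def dyadicWord (k : ℕ) (x : UnitCube d) (n : Fin k) : Fin d → Bool :=
  dyadicDigits x n

variable (d) in
/-- The finite unions of dyadic cubes of one and the same level, a countable π-system generating
the Borel sets. -/
def dyadicSets : Set (Set (UnitCube d)) :=
  {C | ∃ k, ∃ W : Set (Fin k → Fin d → Bool), dyadicWord k ⁻¹' W = C}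

lemma measurable_cubeExpand : Measurable (cubeExpand d) := by
  refine Measurable.subtype_mk (measurable_pi_iff.2 fun i => ?_)
  have hi : Measurable fun x : UnitCube d => (x : Fin d → ℝ) i :=
    (measurable_pi_apply i).comp measurable_subtype_coe
  exact Measurable.ite (measurableSet_lt hi measurable_const)
    ((hi.const_mul 2).add_const 1) ((hi.const_mul 2).sub_const 1)

lemma measurable_dyadicDigit : Measurable (dyadicDigit (d := d)) := by
  refine measurable_pi_iff.2 fun i => measurable_to_bool ?_
  have hi : Measurable fun x : UnitCube d => (x : Fin d → ℝ) i :=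
    (measurable_pi_apply i).comp measurable_subtype_coe
  simpa [dyadicDigit, Set.preimage] using measurableSet_lt hi measurable_const

lemma measurable_dyadicDigits : Measurable (dyadicDigits (d := d)) :=
  measurable_pi_iff.2 fun n => measurable_dyadicDigit.comp (measurable_cubeExpand.iterate n)

lemma measurable_dyadicWord (k : ℕ) : Measurable (dyadicWord (d := d) k) :=
  measurable_pi_iff.2 fun _ => (measurable_pi_apply _).comp measurable_dyadicDigits

lemma cubeOf_eq_preimage_dyadicDigit (x : UnitCube d) :
    cubeOf d x = dyadicDigit ⁻¹' {dyadicDigit x} := by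
  ext y
  simp [cubeOf, dyadicDigit, funext_iff]

lemma dyadicWord_succ (k : ℕ) (x : UnitCube d) :
    dyadicWord (k + 1) x = Fin.cons (dyadicDigit x) (dyadicWord k (cubeExpand d x)) := by
  funext n
  refine Fin.cases rfl (fun m => ?_) n
  simp [dyadicWord, dyadicDigits, Function.iterate_succ_apply]

lemma preimage_dyadicWord_succ (k : ℕ) (w : Fin (k + 1) → Fin d → Bool) :
    dyadicWord (k + 1) ⁻¹' {w} =
      dyadicDigit ⁻¹' {w 0} ∩ cubeExpand d ⁻¹' (dyadicWord k ⁻¹' {Fin.tail w}) := by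
  ext x
  simp only [Set.mem_preimage, Set.mem_singleton_iff, Set.mem_inter_iff, dyadicWord_succ]
  rw [← Fin.cons_self_tail w, Fin.cons_inj, Fin.cons_zero, Fin.tail_cons]

lemma dist_cubeExpand {x y : UnitCube d} (h : dyadicDigit x = dyadicDigit y) :
    dist (cubeExpand d x) (cubeExpand d y) = 2 * dist x y := by
  have hsub : (cubeExpand d x - cubeExpand d y : Fin d → ℝ) = (2 : ℝ) • (x - y : Fin d → ℝ) := by
    funext i
    have hi := congrFun h i
    simp only [dyadicDigit, decide_eq_decide] at hi
    simp only [cubeExpand, Pi.sub_apply, Pi.smul_apply, smul_eq_mul, hi]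
    split_ifs <;> ring
  rw [Subtype.dist_eq, Subtype.dist_eq, dist_eq_norm, dist_eq_norm, hsub, norm_smul]
  simp

lemma dist_iterate_cubeExpand {x y : UnitCube d} (h : dyadicDigits x = dyadicDigits y) (n : ℕ) :
    dist ((cubeExpand d)^[n] x) ((cubeExpand d)^[n] y) = 2 ^ n * dist x y := by
  induction n with
  | zero => simp
  | succ n ih =>
    rw [Function.iterate_succ_apply', Function.iterate_succ_apply',
      dist_cubeExpand (congrFun h n), ih]
    ring

lemma injective_dyadicDigits : Function.Injective (dyadicDigits (d := d)) := by
  intro x y h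
  by_contra hne
  have hpos : 0 < dist x y := dist_pos.2 hne
  obtain ⟨n, hn⟩ := pow_unbounded_of_one_lt (Metric.diam (Set.univ : Set (UnitCube d)) / dist x y)
    (one_lt_two (α := ℝ))
  have hdiam := Metric.dist_le_diam_of_mem isCompact_univ.isBounded
    (Set.mem_univ ((cubeExpand d)^[n] x)) (Set.mem_univ ((cubeExpand d)^[n] y))
  rw [dist_iterate_cubeExpand h] at hdiam
  exact hdiam.not_gt ((div_lt_iff₀ hpos).1 hn)

lemma countable_dyadicSets : (dyadicSets d).Countable := by
  have : dyadicSets d = ⋃ k, Set.range fun W => dyadicWord k ⁻¹' W := by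
    ext C
    simp [dyadicSets]
  rw [this]
  exact Set.countable_iUnion fun k => (Set.finite_range _).countable

lemma univ_mem_dyadicSets : Set.univ ∈ dyadicSets d :=
  ⟨0, Set.univ, Set.preimage_univ⟩

lemma exists_preimage_dyadicWord_eq {k l : ℕ} (hkl : k ≤ l) (W : Set (Fin k → Fin d → Bool)) :
    ∃ V : Set (Fin l → Fin d → Bool), dyadicWord k ⁻¹' W = dyadicWord l ⁻¹' V :=
  ⟨(· ∘ Fin.castLE hkl) ⁻¹' W, rfl⟩

lemma isPiSystem_dyadicSets : IsPiSystem (dyadicSets d) := by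
  rintro _ ⟨k, W, rfl⟩ _ ⟨l, V, rfl⟩ -
  obtain ⟨W', hW⟩ := exists_preimage_dyadicWord_eq (le_max_left k l) W
  obtain ⟨V', hV⟩ := exists_preimage_dyadicWord_eq (le_max_right k l) V
  exact ⟨max k l, W' ∩ V', by rw [hW, hV, Set.preimage_inter]⟩

lemma generateFrom_dyadicSets :
    Subtype.instMeasurableSpace = MeasurableSpace.generateFrom (dyadicSets d) := by
  refine le_antisymm ?_ (MeasurableSpace.generateFrom_le ?_)
  · rw [← (measurable_dyadicDigits.measurableEmbedding injective_dyadicDigits).comap_eq,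
      ← measurable_iff_comap_le]
    refine (@measurable_pi_iff _ _ _ (.generateFrom (dyadicSets d)) _ _).2 fun n A _ =>
      MeasurableSpace.measurableSet_generateFrom ⟨n + 1, {w | w (Fin.last n) ∈ A}, rfl⟩
  · rintro _ ⟨k, W, rfl⟩
    exact measurable_dyadicWord k W.toFinite.measurableSet

end DyadicCoding

section Magnification

variable {d : ℕ}

lemma snd_magnify (p : Xi d) : (magnify d p).2 = cubeExpand d p.2 := by
  unfold magnify
  split_ifs <;> rfl

lemma exists_magnify_eq_of_measure_ne_zero (ν : ProbabilityMeasure (UnitCube d))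
    {a : Fin d → Bool} (ha : (ν : Measure (UnitCube d)) (dyadicDigit ⁻¹' {a}) ≠ 0) :
    ∃ ν' : ProbabilityMeasure (UnitCube d),
      (ν' : Measure (UnitCube d)) = (ν : Measure (UnitCube d))[|dyadicDigit ⁻¹' {a}].map
        (cubeExpand d) ∧
      ∀ x ∈ dyadicDigit ⁻¹' {a}, magnify d (ν, x) = (ν', cubeExpand d x) := by
  have hcond := cond_isProbabilityMeasure ha
  refine ⟨⟨_, Measure.isProbabilityMeasure_map measurable_cubeExpand.aemeasurable⟩, rfl, ?_⟩
  rintro x rfl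
  have hlaw : ((ν : Measure (UnitCube d)) (cubeOf d x))⁻¹ •
      ((ν : Measure (UnitCube d)).restrict (cubeOf d x)).map (cubeExpand d) =
        (ν : Measure (UnitCube d))[|dyadicDigit ⁻¹' {dyadicDigit x}].map (cubeExpand d) := by
    rw [cubeOf_eq_preimage_dyadicDigit, ← Measure.map_smul]
    rfl
  unfold magnify
  rw [dif_pos (hlaw ▸ Measure.isProbabilityMeasure_map measurable_cubeExpand.aemeasurable)]
  exact Prod.ext (Subtype.ext hlaw) rfl

lemma renewsFiber_magnify_preimage_dyadicDigit (a : Fin d → Bool) :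
    RenewsFiber (tautologicalKernel (UnitCube d)) (magnify d) (dyadicDigit ⁻¹' {a}) := by
  intro h hh ν
  change ∫ x in dyadicDigit ⁻¹' {a}, h (magnify d (ν, x)) ∂(ν : Measure (UnitCube d)) = 0
  by_cases ha : (ν : Measure (UnitCube d)) (dyadicDigit ⁻¹' {a}) = 0
  · exact setIntegral_measure_zero _ ha
  obtain ⟨ν', hν', hmagnify⟩ := exists_magnify_eq_of_measure_ne_zero ν ha
  have hD : MeasurableSet (dyadicDigit (d := d) ⁻¹' {a}) :=
    measurable_dyadicDigit (measurableSet_singleton a)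
  have hscaled : ((ν : Measure (UnitCube d)) (dyadicDigit ⁻¹' {a}))⁻¹.toReal •
      ∫ x in dyadicDigit ⁻¹' {a}, h (ν', cubeExpand d x) ∂(ν : Measure (UnitCube d)) = 0 := by
    have hsection : Measurable fun x => h (ν', x) := hh.measurable.comp measurable_prodMk_left
    rw [← integral_smul_measure, ← integral_map measurable_cubeExpand.aemeasurable
      hsection.aestronglyMeasurable]
    exact (congrArg (fun μ => ∫ x, h (ν', x) ∂μ) hν'.symm).trans (hh.integral_eq_zero ν')
  rw [setIntegral_congr_fun hD fun x hx => congrArg h (hmagnify x hx)]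
  refine (smul_eq_zero.1 hscaled).resolve_left (ENNReal.toReal_ne_zero.2 ⟨?_, ?_⟩)
  · exact ENNReal.inv_ne_zero.2 (measure_ne_top _ _)
  · exact ENNReal.inv_ne_top.2 ha

lemma renewsFiber_iterate_magnify_preimage_singleton (hM : Measurable (magnify d)) (k : ℕ)
    (w : Fin k → Fin d → Bool) :
    RenewsFiber (tautologicalKernel (UnitCube d)) (magnify d)^[k] (dyadicWord k ⁻¹' {w}) := by
  induction k with
  | zero =>
    intro h hh ν
    have huniv : dyadicWord 0 ⁻¹' {w} = Set.univ :=
      Set.eq_univ_of_forall fun x => Subsingleton.elim _ _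
    rw [huniv, setIntegral_univ]
    exact hh.integral_eq_zero ν
  | succ k ih =>
    rw [preimage_dyadicWord_succ]
    exact RenewsFiber.comp (hM.iterate k) measurable_cubeExpand snd_magnify
      (measurable_dyadicWord k (measurableSet_singleton _)) (ih _)
      (renewsFiber_magnify_preimage_dyadicDigit _)

lemma renewsFiber_iterate_magnify_preimage_dyadicWord (hM : Measurable (magnify d)) (k : ℕ)
    (W : Set (Fin k → Fin d → Bool)) :
    RenewsFiber (tautologicalKernel (UnitCube d)) (magnify d)^[k] (dyadicWord k ⁻¹' W) := by
  rw [← Set.iUnion_of_singleton_coe W, Set.preimage_iUnion]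
  refine RenewsFiber.iUnion (hM.iterate k)
    (fun w => measurable_dyadicWord k (measurableSet_singleton _)) (fun v w hvw => ?_)
    fun w => renewsFiber_iterate_magnify_preimage_singleton hM k w
  exact (Set.disjoint_singleton.2 fun h => hvw (Subtype.ext h)).preimage _

end Magnification

theorem ae_ergodic_component_adapted_general {Ω : Type*} [MeasurableSpace Ω] {P : Measure Ω}
    {d : ℕ} {Q : Measure (Xi d)} [IsFiniteMeasure Q] (hQ : Adapted d Q) {Qc : Ω → Measure (Xi d)}
    (hprob : ∀ a, IsProbabilityMeasure (Qc a))
    (hmeas : ∀ A : Set (Xi d), MeasurableSet A → Measurable fun a => Qc a A)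
    (hinv : ∀ᵐ a ∂P, MeasurePreserving (magnify d) (Qc a) (Qc a))
    (hdecomp : ∀ A : Set (Xi d), MeasurableSet A → Q A = ∫⁻ a, Qc a A ∂P) :
    ∀ᵐ a ∂P, Adapted d (Qc a) := by
  let κ : Kernel Ω (Xi d) := ⟨Qc, Measure.measurable_of_measurable_coe Qc hmeas⟩
  have hκ : IsMarkovKernel κ := ⟨hprob⟩
  have hbind : κ ∘ₘ P = Q := by
    ext A hA
    rw [Measure.bind_apply hA κ.aemeasurable, hdecomp A hA]
    rfl
  subst hbind
  obtain rfl | hP := eq_zero_or_neZero P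
  · simp
  obtain ⟨a, ha⟩ := hinv.exists
  have hrenew : ∀ C ∈ dyadicSets d, ∃ k,
      RenewsFiber (tautologicalKernel (UnitCube d)) (magnify d)^[k] C ∧
        RenewsFiber (tautologicalKernel (UnitCube d)) (magnify d)^[k] Set.univ := by
    rintro _ ⟨k, W, rfl⟩
    exact ⟨k, renewsFiber_iterate_magnify_preimage_dyadicWord ha.measurable k W,
      renewsFiber_iterate_magnify_preimage_dyadicWord ha.measurable k Set.univ⟩
  have hcond : ∀ᵐ a ∂P, (κ a).IsCondKernel (tautologicalKernel (UnitCube d)) :=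
    ae_isCondKernel_of_ae_measurePreserving (adapted_iff_isCondKernel.1 hQ) ha.measurable hinv
      countable_dyadicSets isPiSystem_dyadicSets univ_mem_dyadicSets generateFrom_dyadicSets hrenew
  exact hcond.mono fun a h => adapted_iff_isCondKernel.2 h

/-- For a CP distribution `Q` with ergodic decomposition `Q = ∫ Q_α dQ(α)` with respect
to the magnification map `M`, `Q`-almost every ergodic component is adapted. -/
theorem ae_ergodic_component_adapted (d : ℕ) (Q : Measure (Xi d))
    (hQ : IsCPD d Q)
    (Qc : Xi d → Measure (Xi d))
    (hprob : ∀ p, IsProbabilityMeasure (Qc p))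
    (hmeas : ∀ A : Set (Xi d), MeasurableSet A → Measurable fun p => Qc p A)
    (herg : ∀ᵐ p ∂Q, Ergodic (magnify d) (Qc p))
    (hdecomp : ∀ A : Set (Xi d), MeasurableSet A → Q A = ∫⁻ p, Qc p A ∂Q) :
    ∀ᵐ p ∂Q, Adapted d (Qc p) := by
  have := hQ.1
  exact ae_ergodic_component_adapted_general hQ.2.2.1 hprob hmeas
    (herg.mono fun _ h => h.toMeasurePreserving) hdecomp
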